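/- Let q ≥ 1 and suppose K_q(a,b,c) = 0. Then every point with well-defined orbit is q-periodic: f^q(x) = x for every x ∈ ℝ \ 𝒫. -/

import Mathlib

/-!
The map `y ↦ (α y + β) / (γ y + δ)` is the action of `M = !![α, β; γ, δ]` on the affine line: along
an orbit that avoids the pole, `M ^ n` sends `(x, 1)` to a nonzero multiple of `(f^[n] x, 1)`.
By Cayley–Hamilton `M ^ (n + 1) = U (n + 1) • M - (det M * U n) • 1`, where `U` is the Lucas
sequence with parameters `tr M` and `det M`. Hence `U q = 0` makes `M ^ q` a scalar matrix, which
fixes every point of the line. For `M = !![1, a; b, c]` the sequence `U` is `K`.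
-/

open Matrix

section LucasSequence

variable {R : Type*} [CommRing R]

/-- The Lucas sequence of the first kind `Uₙ(P, Q)`; it gives the coefficients of the powers of a
root of `X ^ 2 - P * X + Q`. -/
def lucasU (P Q : R) : ℕ → R
  | 0 => 0
  | 1 => 1
  | n + 2 => P * lucasU P Q (n + 1) - Q * lucasU P Q n

lemma eq_lucasU_of_recurrence {P Q : R} {K : ℕ → R} (hK1 : K 1 = 1) (hK2 : K 2 = P)
    (hKrec : ∀ n, K (n + 2) = P * K (n + 1) - Q * K n) :
    ∀ n, K (n + 1) = lucasU P Q (n + 1)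
  | 0 => hK1
  | 1 => by simp [hK2, lucasU]
  | n + 2 => by
    rw [hKrec, eq_lucasU_of_recurrence hK1 hK2 hKrec (n + 1),
      eq_lucasU_of_recurrence hK1 hK2 hKrec n, ← lucasU]

variable {A : Type*} [Ring A] [Algebra R A] {P Q : R} {z : A}

lemma pow_succ_eq_lucasU_smul_sub (hz : z ^ 2 = P • z - Q • 1) (n : ℕ) :
    z ^ (n + 1) = lucasU P Q (n + 1) • z - (Q * lucasU P Q n) • 1 := by
  induction n with
  | zero => simp [lucasU]
  | succ n ih =>
    calc z ^ (n + 1 + 1)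
        = lucasU P Q (n + 1) • z ^ 2 - (Q * lucasU P Q n) • z := by
          rw [pow_succ, ih, sub_mul, smul_mul_assoc, smul_mul_assoc, one_mul, sq]
      _ = lucasU P Q (n + 2) • z - (Q * lucasU P Q (n + 1)) • 1 := by
          rw [hz, lucasU]
          module

lemma exists_pow_eq_smul_one_of_lucasU_eq_zero (hz : z ^ 2 = P • z - Q • 1) {n : ℕ}
    (hn : lucasU P Q n = 0) : ∃ r : R, z ^ n = r • 1 := by
  cases n with
  | zero => exact ⟨1, by simp⟩
  | succ n =>
    refine ⟨-(Q * lucasU P Q n), ?_⟩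
    rw [pow_succ_eq_lucasU_smul_sub hz, hn, zero_smul, zero_sub, neg_smul]

lemma sq_eq_trace_smul_sub_det_smul_one (M : Matrix (Fin 2) (Fin 2) R) :
    M ^ 2 = M.trace • M - M.det • 1 := by
  nontriviality R
  have cayley_hamilton := M.aeval_self_charpoly
  simp only [charpoly_fin_two, map_add, map_sub, map_mul, map_pow, Polynomial.aeval_X,
    Polynomial.aeval_C, Algebra.algebraMap_eq_smul_one, smul_mul_assoc, one_mul] at cayley_hamilton
  rw [← sub_eq_zero, ← cayley_hamilton]
  abel

end LucasSequence

section LinearFractional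

variable {F : Type*} [Field F] (M : Matrix (Fin 2) (Fin 2) F)

/-- The linear fractional map `y ↦ (α y + β) / (γ y + δ)` of the matrix `!![α, β; γ, δ]`, as a total
function on the field: its value at the pole is the junk value `0`. -/
def linearFractional (y : F) : F := (M 0 0 * y + M 0 1) / (M 1 0 * y + M 1 1)

variable {M} {x : F}

lemma mulVec_eq_smul_linearFractional (hx : M 1 0 * x + M 1 1 ≠ 0) :
    M *ᵥ ![x, 1] = (M 1 0 * x + M 1 1) • ![linearFractional M x, 1] := by
  ext i
  fin_cases i <;> simp [mulVec_fin_two, linearFractional, mul_div_cancel₀, hx]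

lemma exists_pow_mulVec_eq_smul_iterate {n : ℕ}
    (hx : ∀ m < n, M 1 0 * (linearFractional M)^[m] x + M 1 1 ≠ 0) :
    ∃ l : F, l ≠ 0 ∧ M ^ n *ᵥ ![x, 1] = l • ![(linearFractional M)^[n] x, 1] := by
  induction n with
  | zero => exact ⟨1, one_ne_zero, by simp⟩
  | succ n ih =>
    obtain ⟨l, hl, hpow⟩ := ih fun m hm => hx m (by lia)
    have hpole := hx n n.lt_succ_self
    refine ⟨_, mul_ne_zero hl hpole, ?_⟩
    rw [pow_succ', ← mulVec_mulVec, hpow, mulVec_smul, mulVec_eq_smul_linearFractional hpole,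
      smul_smul, Function.iterate_succ_apply']

lemma iterate_linearFractional_eq_self {n : ℕ} {r : F} (hM : M ^ n = r • 1)
    (hx : ∀ m < n, M 1 0 * (linearFractional M)^[m] x + M 1 1 ≠ 0) :
    (linearFractional M)^[n] x = x := by
  obtain ⟨l, hl, hpow⟩ := exists_pow_mulVec_eq_smul_iterate hx
  rw [hM, smul_mulVec, one_mulVec] at hpow
  have hfst : r * x = l * (linearFractional M)^[n] x := by simpa using congrFun hpow 0
  have hsnd : r = l := by simpa using congrFun hpow 1
  exact (mul_left_cancel₀ hl (hsnd ▸ hfst)).symm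

end LinearFractional

theorem stmt5_general {F : Type*} [Field F] {α β γ δ : F} {f : F → F}
    (hf : ∀ y, f y = (α * y + β) / (γ * y + δ)) {K : ℕ → F} (hK1 : K 1 = 1) (hK2 : K 2 = α + δ)
    (hKrec : ∀ n, K (n + 2) = (α + δ) * K (n + 1) - (α * δ - β * γ) * K n)
    {q : ℕ} (hKq : K q = 0) {x : F} (hx : ∀ n < q, γ * f^[n] x + δ ≠ 0) :
    f^[q] x = x := by
  obtain rfl : f = linearFractional !![α, β; γ, δ] := funext hf
  cases q with
  | zero => rfl
  | succ q =>
    rw [eq_lucasU_of_recurrence hK1 hK2 hKrec, ← det_fin_two_of, ← trace_fin_two_of α β γ δ] at hKq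
    obtain ⟨r, hscalar⟩ := exists_pow_eq_smul_one_of_lucasU_eq_zero
      (sq_eq_trace_smul_sub_det_smul_one !![α, β; γ, δ]) hKq
    exact iterate_linearFractional_eq_self hscalar hx

/-- Fix `a b c : ℝ` with `b ≠ 0`, `c ≠ a*b`, `f x = (x+a)/(b*x+c)`,
`𝒫 = {x | ∃ n, f^[n] x = -c/b}`, and `K` defined by `K 1 = 1`, `K 2 = 1+c`,
`K (q+2) = (c+1)*K (q+1) - (c-ab)*K q`. Let `q ≥ 1` and suppose `K q = 0`. Then every
point with well-defined orbit is `q`-periodic: `f^[q] x = x` for every `x ∈ ℝ \ 𝒫`. -/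
theorem stmt5 (a b c : ℝ) (hb : b ≠ 0) (hc : c ≠ a * b)
    (f : ℝ → ℝ) (hf : ∀ x, f x = (x + a) / (b * x + c))
    (P : Set ℝ) (hP : P = {x : ℝ | ∃ n : ℕ, f^[n] x = -c / b})
    (K : ℕ → ℝ) (hK1 : K 1 = 1) (hK2 : K 2 = 1 + c)
    (hKrec : ∀ q : ℕ, K (q + 2) = (c + 1) * K (q + 1) - (c - a * b) * K q)
    (q : ℕ) (hq : 1 ≤ q) (hKq : K q = 0) :
    ∀ x : ℝ, x ∉ P → f^[q] x = x := by
  subst hP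
  exact fun x hxP => stmt5_general (by simpa only [one_mul] using hf) hK1 hK2
    (by simpa only [add_comm, one_mul] using hKrec) hKq
    fun n _ hpole => hxP ⟨n, eq_div_of_mul_eq hb (by linear_combination hpole)⟩
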